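/- Assume ε₁ = +1, and for j = 1,2,3 let u_j(t,x) := (2π)^{−1/2} ∫_ℝ e^{ixℓ} e^{itℓ²} f_j(ℓ) dℓ (the free Schrödinger evolution at time t of the inverse Fourier transform of f_j). Then for all x ∈ ℝ: F̂^{−1}[ k ↦ e^{itk²} 𝒯_b(f₁,f₂,f₃)(k) ](x) = (2π)^{3/2} · u₁(t, −ε₂ x) · conj(u₂(t, ε₃ x)) · u₃(t, −ε₄ x) · (F̂^{−1} b)(x). -/

import Mathlib

open MeasureTheory Filter Topology Set

/-- The trilinear form
`𝒯_b(f₁,f₂,f₃)(k) = ∭ e^{it(−k²+ℓ²−m²+n²)} f₁(ℓ) conj(f₂(m)) f₃(n) b(ε₁k+ε₂ℓ+ε₃m+ε₄n)`. -/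
noncomputable def Tform (t e1 e2 e3 e4 : ℝ) (b f1 f2 f3 : ℝ → ℂ) (k : ℝ) : ℂ :=
  ∫ l : ℝ, ∫ m : ℝ, ∫ n : ℝ,
    Complex.exp (Complex.I * (t : ℂ) * ((-(k ^ 2) + l ^ 2 - m ^ 2 + n ^ 2 : ℝ) : ℂ)) *
      f1 l * (starRingEnd ℂ) (f2 m) * f3 n * b (e1 * k + e2 * l + e3 * m + e4 * n)

/-- Inverse Fourier transform `F̂⁻¹[g](x) = (2π)^{−1/2} ∫ e^{ixξ} g(ξ) dξ`. -/
noncomputable def invFT (g : ℝ → ℂ) (x : ℝ) : ℂ :=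
  (Real.sqrt (2 * Real.pi) : ℂ)⁻¹ * ∫ ξ : ℝ, Complex.exp (Complex.I * (x : ℂ) * (ξ : ℂ)) * g ξ

/-- The free Schrödinger evolution at time `t` of the inverse Fourier transform of `f`:
`u(t,x) = (2π)^{−1/2} ∫ e^{ixℓ} e^{itℓ²} f(ℓ) dℓ`. -/
noncomputable def freeEvol (t : ℝ) (f : ℝ → ℂ) (x : ℝ) : ℂ :=
  (Real.sqrt (2 * Real.pi) : ℂ)⁻¹ * ∫ l : ℝ,
    Complex.exp (Complex.I * (x : ℂ) * (l : ℂ)) *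
      Complex.exp (Complex.I * (t : ℂ) * (l : ℂ) ^ 2) * f l

/-!
The factor `e^{itk²}` cancels the `k`-part of the phase of `𝒯_b`, and the rest of the phase splits
over the variables. Hence `e^{itk²} 𝒯_b(f₁,f₂,f₃)(k)` is an iterated convolution, along the
shears `k ↦ k + εⱼ l`, of `b` with the functions `e^{itl²} fⱼ(l)` (conjugated for `j = 2`). The
inverse Fourier transform turns each convolution into a product, at the cost of one factor
`(2π)^{1/2}`, and the inverse Fourier transform of `e^{itl²} fⱼ(l)` is the free evolution of `fⱼ`.
-/

/-- The convolution of `g` and `h` sheared along `φ`, `k ↦ ∫ g(a) h(k + φ(a)) dμ(a)`; it is the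
usual convolution for `φ a = -a`. It describes each of the three integrations in `Tform`. -/
noncomputable def shearConv {α G 𝕜 : Type*} [MeasurableSpace α] [Add G] [RCLike 𝕜]
    (μ : Measure α) (φ : α → G) (g : α → 𝕜) (h : G → 𝕜) (k : G) : 𝕜 :=
  ∫ a, g a * h (k + φ a) ∂μ

section ShearConv

variable {α G 𝕜 : Type*} [MeasurableSpace α] [MeasurableSpace G] [AddGroup G] [RCLike 𝕜]
  {μ : Measure α} {ν : Measure G} {φ : α → G} {g : α → 𝕜} {h : G → 𝕜}
  [MeasurableAdd₂ G] [SFinite μ] [SFinite ν] [ν.IsAddRightInvariant]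

lemma measurePreserving_prod_shear (hφ : Measurable φ) :
    MeasurePreserving (fun p : α × G => (p.1, p.2 + φ p.1)) (μ.prod ν) (μ.prod ν) :=
  (MeasurePreserving.id μ).skew_product (g := fun a k => k + φ a) (by fun_prop)
    (.of_forall fun a => map_add_right_eq_self ν (φ a))

lemma integrable_prod_mul_shear (hφ : Measurable φ) (hg : Integrable g μ) (hh : Integrable h ν) :
    Integrable (fun p : α × G => g p.1 * h (p.2 + φ p.1)) (μ.prod ν) :=
  (measurePreserving_prod_shear hφ).integrable_comp_of_integrable (hg.mul_prod hh)

lemma integrable_shearConv (hφ : Measurable φ) (hg : Integrable g μ) (hh : Integrable h ν) :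
    Integrable (shearConv μ φ g h) ν :=
  (integrable_prod_mul_shear hφ hg hh).integral_prod_right

lemma integral_shearConv (hφ : Measurable φ) (hg : Integrable g μ) (hh : Integrable h ν) :
    ∫ k, shearConv μ φ g h k ∂ν = (∫ a, g a ∂μ) * ∫ k, h k ∂ν :=
  calc ∫ k, shearConv μ φ g h k ∂ν
      = ∫ a, ∫ k, g a * h (k + φ a) ∂ν ∂μ :=
        (integral_integral_swap (integrable_prod_mul_shear hφ hg hh)).symm
    _ = ∫ a, g a * ∫ k, h k ∂ν ∂μ := by
        simp only [integral_const_mul, integral_add_right_eq_self]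
    _ = (∫ a, g a ∂μ) * ∫ k, h k ∂ν := integral_mul_const _ _

end ShearConv

lemma integrable_cexp_mul_of_re_nonpos {α : Type*} [MeasurableSpace α] {μ : Measure α}
    {φ g : α → ℂ} (hφ : AEMeasurable φ μ) (hre : ∀ᵐ a ∂μ, (φ a).re ≤ 0) (hg : Integrable g μ) :
    Integrable (fun a => Complex.exp (φ a) * g a) μ :=
  hg.bdd_mul (c := 1) hφ.cexp.aestronglyMeasurable
    (hre.mono fun a ha => by rwa [Complex.norm_exp, Real.exp_le_one_iff])

lemma integrable_cexp_linear_mul {g : ℝ → ℂ} (hg : Integrable g) (x : ℝ) :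
    Integrable fun ξ : ℝ => Complex.exp (Complex.I * x * ξ) * g ξ :=
  integrable_cexp_mul_of_re_nonpos (by fun_prop) (.of_forall fun ξ => by simp) hg

lemma cexp_mul_shearConv (x e : ℝ) (g h : ℝ → ℂ) (k : ℝ) :
    Complex.exp (Complex.I * x * k) * shearConv volume (e * ·) g h k =
      shearConv volume (e * ·) (fun l => Complex.exp (Complex.I * (-e * x : ℝ) * l) * g l)
        (fun y => Complex.exp (Complex.I * x * y) * h y) k := by
  unfold shearConv
  rw [← integral_const_mul]
  congr 1 with l
  have hexp : Complex.exp (Complex.I * x * k) =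
      Complex.exp (Complex.I * (-e * x : ℝ) * l) *
        Complex.exp (Complex.I * x * (k + e * l : ℝ)) := by
    rw [← Complex.exp_add]
    push_cast
    ring_nf
  rw [hexp]
  ring

lemma invFT_shearConv (e : ℝ) {g h : ℝ → ℂ} (hg : Integrable g) (hh : Integrable h) (x : ℝ) :
    invFT (shearConv volume (e * ·) g h) x =
      (Real.sqrt (2 * Real.pi) : ℂ) * invFT g (-e * x) * invFT h x := by
  have hne : (Real.sqrt (2 * Real.pi) : ℂ) ≠ 0 :=
    Complex.ofReal_ne_zero.mpr (Real.sqrt_ne_zero'.mpr Real.two_pi_pos)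
  simp only [invFT, cexp_mul_shearConv]
  rw [integral_shearConv (measurable_const_mul e) (integrable_cexp_linear_mul hg _)
    (integrable_cexp_linear_mul hh x)]
  field_simp

lemma invFT_conj (g : ℝ → ℂ) (x : ℝ) :
    invFT (fun ξ => (starRingEnd ℂ) (g ξ)) x = (starRingEnd ℂ) (invFT g (-x)) := by
  simp only [invFT, map_mul, map_inv₀, Complex.conj_ofReal, ← integral_conj, ← Complex.exp_conj,
    Complex.conj_I, Complex.ofReal_neg, map_neg, neg_mul_neg]

/-- The free Schrödinger flow on the Fourier side: multiplication of `f` by `e^{itl²}`. -/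
noncomputable def schrodingerMul (t : ℝ) (f : ℝ → ℂ) (l : ℝ) : ℂ :=
  Complex.exp (Complex.I * t * (l : ℂ) ^ 2) * f l

lemma integrable_schrodingerMul (t : ℝ) {f : ℝ → ℂ} (hf : Integrable f) :
    Integrable (schrodingerMul t f) :=
  integrable_cexp_mul_of_re_nonpos (by fun_prop)
    (.of_forall fun l => by simp [← Complex.ofReal_pow]) hf

lemma invFT_schrodingerMul (t : ℝ) (f : ℝ → ℂ) : invFT (schrodingerMul t f) = freeEvol t f := by
  funext x
  simp only [invFT, schrodingerMul, freeEvol, mul_assoc]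

lemma cexp_mul_Tform (t e2 e3 e4 : ℝ) (b f1 f2 f3 : ℝ → ℂ) :
    (fun k : ℝ => Complex.exp (Complex.I * t * (k : ℂ) ^ 2) * Tform t 1 e2 e3 e4 b f1 f2 f3 k) =
      shearConv volume (e2 * ·) (schrodingerMul t f1)
        (shearConv volume (e3 * ·) (fun m => (starRingEnd ℂ) (schrodingerMul t f2 m))
          (shearConv volume (e4 * ·) (schrodingerMul t f3) b)) := by
  funext k
  simp only [Tform, shearConv, ← integral_const_mul]
  congr 1 with l; congr 1 with m; congr 1 with n
  have hphase : Complex.exp (Complex.I * t * (k : ℂ) ^ 2) *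
      Complex.exp (Complex.I * t * (-(k ^ 2) + l ^ 2 - m ^ 2 + n ^ 2 : ℝ)) =
      Complex.exp (Complex.I * t * (l : ℂ) ^ 2) *
        (starRingEnd ℂ) (Complex.exp (Complex.I * t * (m : ℂ) ^ 2)) *
        Complex.exp (Complex.I * t * (n : ℂ) ^ 2) := by
    simp only [← Complex.exp_conj, map_mul, map_pow, Complex.conj_I, Complex.conj_ofReal,
      ← Complex.exp_add]
    push_cast
    ring_nf
  simp only [schrodingerMul, map_mul, one_mul]
  linear_combination
    (f1 l * (starRingEnd ℂ) (f2 m) * f3 n * b (k + e2 * l + e3 * m + e4 * n)) * hphase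

theorem statement_12_general (t e2 e3 e4 : ℝ) {b f1 f2 f3 : ℝ → ℂ} (hb : Integrable b)
    (hf1 : Integrable f1) (hf2 : Integrable f2) (hf3 : Integrable f3) (x : ℝ) :
    invFT (fun k => Complex.exp (Complex.I * (t : ℂ) * (k : ℂ) ^ 2) *
        Tform t 1 e2 e3 e4 b f1 f2 f3 k) x =
      (((2 * Real.pi) ^ ((3:ℝ)/2) : ℝ) : ℂ) * freeEvol t f1 (-e2 * x) *
        (starRingEnd ℂ) (freeEvol t f2 (e3 * x)) * freeEvol t f3 (-e4 * x) * invFT b x := by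
  have hg1 := integrable_schrodingerMul t hf1
  have hg2 : Integrable fun m => (starRingEnd ℂ) (schrodingerMul t f2 m) :=
    (Complex.conjCLE : ℂ →L[ℝ] ℂ).integrable_comp (integrable_schrodingerMul t hf2)
  have hg3 := integrable_schrodingerMul t hf3
  have hconv3 := integrable_shearConv (measurable_const_mul e4) hg3 hb
  have hconv2 := integrable_shearConv (measurable_const_mul e3) hg2 hconv3
  rw [cexp_mul_Tform, invFT_shearConv e2 hg1 hconv2, invFT_shearConv e3 hg2 hconv3,
    invFT_shearConv e4 hg3 hb, invFT_conj, neg_mul e3, neg_neg]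
  simp only [invFT_schrodingerMul]
  rw [Real.rpow_div_two_eq_sqrt 3 Real.two_pi_pos.le, Real.rpow_ofNat]
  push_cast
  ring

/-- With `ε₁ = 1`:
`F̂⁻¹[e^{itk²} 𝒯_b(f₁,f₂,f₃)](x)
  = (2π)^{3/2} u₁(t,−ε₂x) conj(u₂(t,ε₃x)) u₃(t,−ε₄x) (F̂⁻¹b)(x)`. -/
theorem statement_12 (t : ℝ) (e2 e3 e4 : ℝ)
    (h2 : e2 = 1 ∨ e2 = -1) (h3 : e3 = 1 ∨ e3 = -1) (h4 : e4 = 1 ∨ e4 = -1)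
    (b f1 f2 f3 : SchwartzMap ℝ ℂ) (x : ℝ) :
    invFT (fun k => Complex.exp (Complex.I * (t : ℂ) * (k : ℂ) ^ 2) *
        Tform t 1 e2 e3 e4 b f1 f2 f3 k) x =
      (((2 * Real.pi) ^ ((3:ℝ)/2) : ℝ) : ℂ) * freeEvol t f1 (-e2 * x) *
        (starRingEnd ℂ) (freeEvol t f2 (e3 * x)) * freeEvol t f3 (-e4 * x) * invFT b x :=
  statement_12_general t e2 e3 e4 b.integrable f1.integrable f2.integrable f3.integrable x
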